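/- Let C be a regular category and X an object with global support. Then X is projection-coextensive if and only if the pushout of any binary product diagram of X along any product projection of X exists and is a binary product diagram; that is, for every binary product diagram (π₁ : X → A₁, π₂ : X → A₂) and every product projection p : X → Y, pushouts of π₁ and π₂ along p exist and the resulting pair of pushout legs (b₁ : Y → B₁, b₂ : Y → B₂) is a binary product diagram. -/

import Mathlib

open CategoryTheory CategoryTheory.Limits

universe v u

variable {C : Type u} [Category.{v} C]

/-- `(p, q)` is a binary product diagram, exhibiting `X` as the product of `A` and `B`. -/
def IsBinaryProduct {X A B : C} (p : X ⟶ A) (q : X ⟶ B) : Prop :=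
  Nonempty (IsLimit (BinaryFan.mk p q))

/-- `p : X ⟶ A` is a product projection. -/
def IsProductProjection {X A : C} (p : X ⟶ A) : Prop :=
  ∃ (B : C) (q : X ⟶ B), IsBinaryProduct p q

/-- A pushout square whose two legs belong to the class `M`. -/
def IsMPushout (M : MorphismProperty C) {Z A B P : C}
    (f : Z ⟶ A) (g : Z ⟶ B) (a : A ⟶ P) (b : B ⟶ P) : Prop :=
  IsPushout f g a b ∧ M a ∧ M b

/-- `X` is an `M`-coextensive object. -/
structure MCoextensive (M : MorphismProperty C) (X : C) : Prop where
  pushout_exists : ∀ ⦃Y A : C⦄ (m : X ⟶ Y) (p : X ⟶ A), M m → IsProductProjection p →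
    ∃ (P : C) (a : A ⟶ P) (b : Y ⟶ P), IsMPushout M p m a b
  isBinaryProduct_iff : ∀ ⦃A₁ A₂ Y B₁ B₂ : C⦄ (π₁ : X ⟶ A₁) (π₂ : X ⟶ A₂)
    (f : X ⟶ Y) (p₁ : A₁ ⟶ B₁) (p₂ : A₂ ⟶ B₂) (π₁' : Y ⟶ B₁) (π₂' : Y ⟶ B₂),
    IsBinaryProduct π₁ π₂ → M f → M p₁ → M p₂ →
    π₁ ≫ p₁ = f ≫ π₁' → π₂ ≫ p₂ = f ≫ π₂' →
    (IsBinaryProduct π₁' π₂' ↔ (IsMPushout M π₁ f p₁ π₁' ∧ IsMPushout M π₂ f p₂ π₂'))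

/-- The class of product projections. -/
def projections (C : Type u) [Category.{v} C] : MorphismProperty C :=
  fun _ _ f => IsProductProjection f

/-- `X` is projection-coextensive. -/
def ProjectionCoextensive (X : C) : Prop := MCoextensive (projections C) X

/-- `f` is a regular epimorphism (a coequalizer of some parallel pair). -/
def IsRegularEpimorphism {X Y : C} (f : X ⟶ Y) : Prop :=
  ∃ (W : C) (a b : W ⟶ X) (h : a ≫ f = b ≫ f), Nonempty (IsColimit (Cofork.ofπ f h))

/-- The class of regular epimorphisms. -/
def regularEpis (C : Type u) [Category.{v} C] : MorphismProperty C :=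
  fun _ _ f => IsRegularEpimorphism f

/-- `X` is regularly-coextensive. -/
def RegularlyCoextensive (X : C) : Prop := MCoextensive (regularEpis C) X

/-- A regular category: finitely complete, coequalizers of kernel pairs, and
regular epimorphisms are stable under pullback. -/
class IsRegularCategory (C : Type u) [Category.{v} C] [HasFiniteLimits C] : Prop where
  hasCoequalizer_kernelPair : ∀ {X Y : C} (f : X ⟶ Y),
    HasCoequalizer (pullback.fst f f) (pullback.snd f f)
  regularEpi_stable : ∀ {X Y Z : C} (f : X ⟶ Y) (g : Z ⟶ Y),
    IsRegularEpimorphism f → IsRegularEpimorphism (pullback.snd f g)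

/-- `X` has global support: the unique morphism to the terminal object is a regular epi. -/
def HasGlobalSupport [HasTerminal C] (X : C) : Prop :=
  IsRegularEpimorphism (terminal.from X)

theorem IsBinaryProduct.swap {X A B : C} {p : X ⟶ A} {q : X ⟶ B} (h : IsBinaryProduct p q) :
    IsBinaryProduct q p :=
  ⟨BinaryFan.isLimitFlip h.some⟩

theorem IsBinaryProduct.exists_lift {X A B T : C} {p : X ⟶ A} {q : X ⟶ B}
    (h : IsBinaryProduct p q) (s : T ⟶ A) (t : T ⟶ B) :
    ∃ l : T ⟶ X, l ≫ p = s ∧ l ≫ q = t :=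
  ⟨(BinaryFan.IsLimit.lift' h.some s t).1, (BinaryFan.IsLimit.lift' h.some s t).2.1,
    (BinaryFan.IsLimit.lift' h.some s t).2.2⟩

theorem IsBinaryProduct.ext {X A B T : C} {p : X ⟶ A} {q : X ⟶ B}
    (h : IsBinaryProduct p q) {s t : T ⟶ X} (h₁ : s ≫ p = t ≫ p) (h₂ : s ≫ q = t ≫ q) :
    s = t :=
  BinaryFan.IsLimit.hom_ext h.some h₁ h₂

theorem IsBinaryProduct.of_iso {X A B A' B' : C} {p : X ⟶ A} {q : X ⟶ B}
    (h : IsBinaryProduct p q) (e : A ≅ A') (e' : B ≅ B') :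
    IsBinaryProduct (p ≫ e.hom) (q ≫ e'.hom) := by
  refine ⟨BinaryFan.IsLimit.mk _ (fun s t => (h.exists_lift (s ≫ e.inv) (t ≫ e'.inv)).choose)
    ?_ ?_ ?_⟩
  · intro T s t
    have := (h.exists_lift (s ≫ e.inv) (t ≫ e'.inv)).choose_spec.1
    simp [reassoc_of% this]
  · intro T s t
    have := (h.exists_lift (s ≫ e.inv) (t ≫ e'.inv)).choose_spec.2
    simp [reassoc_of% this]
  · intro T s t m h₁ h₂
    have k := (h.exists_lift (s ≫ e.inv) (t ≫ e'.inv)).choose_spec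
    apply h.ext
    · rw [k.1, ← h₁]; simp
    · rw [k.2, ← h₂]; simp

theorem IsRegularEpimorphism.cancel {X Y : C} {f : X ⟶ Y} (hf : IsRegularEpimorphism f)
    {Z : C} {s t : Y ⟶ Z} (h : f ≫ s = f ≫ t) : s = t := by
  obtain ⟨W, a, b, w, ⟨hc⟩⟩ := hf
  exact Cofork.IsColimit.hom_ext hc h

theorem IsRegularEpimorphism.isIso_of_mono {X Y Z : C} {f : X ⟶ Y}
    (hf : IsRegularEpimorphism f) {k : X ⟶ Z} {m : Z ⟶ Y} [Mono m] (h : k ≫ m = f) :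
    IsIso m := by
  have hf' := hf
  obtain ⟨W, a, b, w, ⟨hc⟩⟩ := hf
  have hk : a ≫ k = b ≫ k := by
    rw [← cancel_mono m, Category.assoc, Category.assoc, h, w]
  obtain ⟨d, hd'⟩ : ∃ d : Y ⟶ Z, f ≫ d = k :=
    ⟨(Cofork.IsColimit.desc' hc k hk).1, (Cofork.IsColimit.desc' hc k hk).2⟩
  have h1 : d ≫ m = 𝟙 _ := hf'.cancel (by rw [reassoc_of% hd', h, Category.comp_id])
  exact ⟨d, by rw [← cancel_mono m, Category.assoc, h1]; simp, h1⟩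

theorem isIso_of_products [HasFiniteLimits C] [IsRegularCategory C] {X : C}
    (hgs : HasGlobalSupport X) {Y P₁ P₂ B₁ B₂ : C} (f : X ⟶ Y)
    {b₁ : Y ⟶ P₁} {b₂ : Y ⟶ P₂} {q₁ : Y ⟶ B₁} {q₂ : Y ⟶ B₂}
    (hb : IsBinaryProduct b₁ b₂) (hq : IsBinaryProduct q₁ q₂)
    (c₁ : P₁ ⟶ B₁) (c₂ : P₂ ⟶ B₂) (h₁ : b₁ ≫ c₁ = q₁) (h₂ : b₂ ≫ c₂ = q₂) : IsIso c₁ := by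
  have hr (T : C) := IsRegularCategory.regularEpi_stable (terminal.from X) (terminal.from T) hgs
  have : Mono c₁ := by
    constructor
    intro T u v huv
    apply (hr T).cancel
    obtain ⟨U, hU₁, hU₂⟩ := hb.exists_lift
      (pullback.snd (terminal.from X) (terminal.from T) ≫ u) (pullback.fst _ _ ≫ f ≫ b₂)
    obtain ⟨V, hV₁, hV₂⟩ := hb.exists_lift
      (pullback.snd (terminal.from X) (terminal.from T) ≫ v) (pullback.fst _ _ ≫ f ≫ b₂)
    have : U = V := by
      apply hq.ext
      · rw [← h₁, reassoc_of% hU₁, reassoc_of% hV₁, huv]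
      · rw [← h₂, reassoc_of% hU₂, reassoc_of% hV₂]
    rw [← hU₁, ← hV₁, this]
  obtain ⟨W, hW₁, -⟩ := hq.exists_lift
    (pullback.snd (terminal.from X) (terminal.from B₁)) (pullback.fst _ _ ≫ f ≫ q₂)
  exact (hr B₁).isIso_of_mono (k := W ≫ b₁) (by rw [Category.assoc, h₁, hW₁])

theorem isPushout_of_isIso {X A Y P B : C} {p : X ⟶ A} {f : X ⟶ Y} {a : A ⟶ P} {b : Y ⟶ P}
    (h : IsPushout p f a b) {a' : A ⟶ B} {b' : Y ⟶ B} (c : P ⟶ B) [IsIso c]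
    (ha : a ≫ c = a') (hb : b ≫ c = b') : IsPushout p f a' b' :=
  IsPushout.of_iso h (Iso.refl _) (Iso.refl _) (Iso.refl _) (asIso c) (by simp) (by simp)
    (by simp [ha]) (by simp [hb])

/-- An object with global support in a regular category is projection-coextensive
if and only if the pushout of any of its binary product diagrams along any of its
product projections exists and is a binary product diagram. -/
theorem projectionCoextensive_iff_pushout_prod
    {C : Type u} [Category.{v} C] [HasFiniteLimits C] [IsRegularCategory C]
    (X : C) (hgs : HasGlobalSupport X) :
    ProjectionCoextensive X ↔
      ∀ ⦃A₁ A₂ Y : C⦄ (π₁ : X ⟶ A₁) (π₂ : X ⟶ A₂) (p : X ⟶ Y),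
        IsBinaryProduct π₁ π₂ → IsProductProjection p →
        ∃ (B₁ B₂ : C) (a₁ : A₁ ⟶ B₁) (b₁ : Y ⟶ B₁) (a₂ : A₂ ⟶ B₂) (b₂ : Y ⟶ B₂),
          IsPushout π₁ p a₁ b₁ ∧ IsPushout π₂ p a₂ b₂ ∧ IsBinaryProduct b₁ b₂ := by
  constructor
  · intro hX A₁ A₂ Y π₁ π₂ p hπ hp
    obtain ⟨B₁, a₁, b₁, h₁⟩ := hX.pushout_exists p π₁ hp ⟨_, _, hπ⟩
    obtain ⟨B₂, a₂, b₂, h₂⟩ := hX.pushout_exists p π₂ hp ⟨_, _, hπ.swap⟩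
    exact ⟨B₁, B₂, a₁, b₁, a₂, b₂, h₁.1, h₂.1,
      (hX.isBinaryProduct_iff π₁ π₂ p a₁ a₂ b₁ b₂ hπ hp h₁.2.1 h₂.2.1 h₁.1.w h₂.1.w).2 ⟨h₁, h₂⟩⟩
  · intro H
    refine ⟨?_, ?_⟩
    · rintro Y A f p ⟨Y', f', hf⟩ ⟨A', p', hp⟩
      obtain ⟨B₁, B₂, a₁, b₁, a₂, b₂, h₁, h₂, hb⟩ := H p p' f hp ⟨_, _, hf⟩
      obtain ⟨D₁, D₂, c₁, d₁, c₂, d₂, k₁, k₂, hd⟩ := H f f' p hf ⟨_, _, hp⟩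
      refine ⟨B₁, a₁, b₁, h₁, ?_, ⟨_, _, hb⟩⟩
      refine ⟨D₂, d₂, ?_⟩
      have := hd.of_iso (k₁.flip.isoIsPushout _ _ h₁) (Iso.refl _)
      simpa using this
    · intro A₁ A₂ Y B₁ B₂ π₁ π₂ f p₁ p₂ q₁ q₂ hπ hf hp₁ hp₂ w₁ w₂
      obtain ⟨P₁, P₂, a₁, b₁, a₂, b₂, h₁, h₂, hb⟩ := H π₁ π₂ f hπ hf
      constructor
      · intro hq
        have i₁ : IsIso (h₁.desc p₁ q₁ w₁) :=
          isIso_of_products hgs f hb hq _ (h₂.desc p₂ q₂ w₂) (by simp) (by simp)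
        have i₂ : IsIso (h₂.desc p₂ q₂ w₂) :=
          isIso_of_products hgs f hb.swap hq.swap _ (h₁.desc p₁ q₁ w₁) (by simp) (by simp)
        exact ⟨⟨isPushout_of_isIso h₁ (h₁.desc p₁ q₁ w₁) (by simp) (by simp), hp₁, _, _, hq⟩,
          ⟨isPushout_of_isIso h₂ (h₂.desc p₂ q₂ w₂) (by simp) (by simp), hp₂, _, _, hq.swap⟩⟩
      · rintro ⟨⟨k₁, -, -⟩, ⟨k₂, -, -⟩⟩
        have := hb.of_iso (h₁.isoIsPushout _ _ k₁) (h₂.isoIsPushout _ _ k₂)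
        simpa using this
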